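/- Let γ > 0 and let −1 < z₁ < ⋯ < z_n < 1 with n ≥ 2 be an axisymmetric configuration of mass m = 0 that is a critical point of E_γ. Then z₁ ≥ a/√(1+a²), where a := −(6γ/e + 1/√3) and e is Euler's number. In particular the diameter of the polar cap determined by the first interface z₁ is bounded from below in terms of γ. -/

import Mathlib

/-!
Let `c x = x / √(1 - x²)` and `δ = 1 + z 1`. The inverse of `c` is `a ↦ a / √(1 + a²)`, and
`c (-1/2) = -1/√3`, so only the case `δ < 1/2` matters.

In that case mass `m ≤ 0` forces `z 2 ≤ δ < 1/2`, because `∫ u` can drop by at most `1 - z 2`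
beyond `z 2`. Hence `c (z 2) ≤ 1/√3`, and subtracting the Euler–Lagrange equations at the first
two interfaces gives `c (z 1) = -c (z 2) + 4γ ∫_{z 1}^{z 2} ξ(s)/(1-s²) ds`. On `[z 1, z 2]` one has
`ξ(s) ≥ (1 + s) - 2δ`, so the integrand is negative only for `1 + s < 2δ`, an interval of length at
most `δ`, and there it is at least `-1`. The integral is thus at least `-1/2`, which yields
`c (z 1) ≥ -(2γ + 1/√3)`; finally `2 ≤ 6/e`.
-/

/-- The axisymmetric step pattern with `n` interfaces located at `z 1 < ⋯ < z n`
(with `z 0 = -1`, `z (n+1) = 1`): `u(t) = (-1)^(k+1)` for `t ∈ [z k, z (k+1))`,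
so `u = -1` on `[-1, z 1)`. -/
noncomputable def pattern (n : ℕ) (z : ℕ → ℝ) (t : ℝ) : ℝ :=
  (-1 : ℝ) ^ (((Finset.Icc 1 n).filter (fun i => z i ≤ t)).card + 1)

/-- The mass `m = (1/2)∫_{-1}^1 u(t) dt`. -/
noncomputable def mass (n : ℕ) (z : ℕ → ℝ) : ℝ :=
  (1 / 2) * ∫ t in (-1 : ℝ)..1, pattern n z t

/-- `ξ(t) = ∫_{-1}^t (u(s) - m) ds`. -/
noncomputable def xi (n : ℕ) (z : ℕ → ℝ) (t : ℝ) : ℝ :=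
  ∫ s in (-1 : ℝ)..t, (pattern n z s - mass n z)

/-- The potential `v(t) = ∫_0^t ξ(s)/(1-s²) ds`. -/
noncomputable def pot (n : ℕ) (z : ℕ → ℝ) (t : ℝ) : ℝ :=
  ∫ s in (0 : ℝ)..t, xi n z s / (1 - s ^ 2)

/-- `z` is an axisymmetric configuration with `n` interfaces:
`-1 = z 0 < z 1 < ⋯ < z n < z (n+1) = 1`. -/
def IsConfig (n : ℕ) (z : ℕ → ℝ) : Prop :=
  z 0 = -1 ∧ z (n + 1) = 1 ∧ ∀ i j, i < j → j ≤ n + 1 → z i < z j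

/-- The configuration is a critical point of `E_γ`: the Euler–Lagrange equation
`κ_g(z_k) + 4γ v(z_k) = λ` holds at every interface `z 1, …, z n`, with a single
constant `λ`; here `κ_g(z_k) = (-1)^(k+1) z_k / √(1 - z_k²)` is the signed geodesic
curvature of the interface circle with respect to the outer normal of `{u = 1}`. -/
def IsCritical (γ : ℝ) (n : ℕ) (z : ℕ → ℝ) : Prop :=
  ∃ lam : ℝ, ∀ k, 1 ≤ k → k ≤ n →
    (-1 : ℝ) ^ (k + 1) * z k / Real.sqrt (1 - z k ^ 2) + 4 * γ * pot n z (z k) = lam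

open MeasureTheory Set

lemma neg_mul_sub_le_integral {f : ℝ → ℝ} {a b c C : ℝ} (hab : a ≤ b) (hac : a ≤ c) (hC : 0 ≤ C)
    (hf : IntervalIntegrable f volume a b) (hleft : ∀ s ∈ Icc a b, s ≤ c → -C ≤ f s)
    (hright : ∀ s ∈ Icc a b, c ≤ s → 0 ≤ f s) :
    -C * (c - a) ≤ ∫ s in a..b, f s := by
  have left_bound : ∀ d ∈ Icc a b, d ≤ c → -C * (d - a) ≤ ∫ s in a..d, f s := by
    intro d hd hdc
    have hfd : IntervalIntegrable f volume a d :=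
      hf.mono_set (uIcc_subset_uIcc_left (Icc_subset_uIcc hd))
    have := intervalIntegral.integral_mono_on hd.1 (intervalIntegrable_const (c := -C)) hfd
      fun s hs => hleft s ⟨hs.1, hs.2.trans hd.2⟩ (hs.2.trans hdc)
    simpa only [intervalIntegral.integral_const, smul_eq_mul, mul_comm] using this
  rcases le_total b c with hbc | hcb
  · calc -C * (c - a) ≤ -C * (b - a) :=
          mul_le_mul_of_nonpos_left (by linarith) (neg_nonpos.2 hC)
      _ ≤ ∫ s in a..b, f s := left_bound b (right_mem_Icc.2 hab) hbc
  · have hc : c ∈ uIcc a b := Icc_subset_uIcc ⟨hac, hcb⟩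
    have hpos : 0 ≤ ∫ s in c..b, f s := intervalIntegral.integral_nonneg hcb
      fun s hs => hright s ⟨hac.trans hs.1, hs.2⟩ hs.1
    rw [← intervalIntegral.integral_add_adjacent_intervals
      (hf.mono_set (uIcc_subset_uIcc_left hc)) (hf.mono_set (uIcc_subset_uIcc_right hc))]
    linarith [left_bound c ⟨hac, hcb⟩ le_rfl]

lemma div_sqrt_one_add_sq_strictMono : StrictMono fun a : ℝ => a / √(1 + a ^ 2) := by
  simpa only [Real.sin_arctan] using Real.sin_arctan_strictMono

lemma div_sqrt_one_add_sq_le_iff {a x : ℝ} (hx : x ∈ Ioo (-1 : ℝ) 1) :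
    a / √(1 + a ^ 2) ≤ x ↔ a ≤ x / √(1 - x ^ 2) := by
  rw [← Real.arctan_le_arctan_iff (x := a), ← Real.arcsin_eq_arctan hx, ← Real.sin_arctan,
    Real.le_arcsin_iff_sin_le (Ioo_subset_Icc_self (Real.arctan_mem_Ioo a))
      (Ioo_subset_Icc_self hx)]

lemma monotoneOn_div_sqrt_one_sub_sq :
    MonotoneOn (fun x : ℝ => x / √(1 - x ^ 2)) (Ioo (-1) 1) := fun _ hx _ hy hxy =>
  (div_sqrt_one_add_sq_le_iff hy).1 (((div_sqrt_one_add_sq_le_iff hx).2 le_rfl).trans hxy)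

lemma half_div_sqrt_one_sub_half_sq : (1 / 2 : ℝ) / √(1 - (1 / 2) ^ 2) = 1 / √3 := by
  rw [← Real.tan_arcsin, ← Real.sin_pi_div_six, Real.arcsin_sin, Real.tan_pi_div_six] <;>
    linarith [Real.pi_pos]

lemma measurable_pattern (n : ℕ) (z : ℕ → ℝ) : Measurable (pattern n z) := by
  have hcard : Measurable fun t : ℝ => ((Finset.Icc 1 n).filter (fun i => z i ≤ t)).card := by
    simp only [Finset.card_filter]
    exact Finset.measurable_sum _ fun i _ =>
      Measurable.ite measurableSet_Ici measurable_const measurable_const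
  exact (measurable_from_nat (f := fun k : ℕ => (-1 : ℝ) ^ (k + 1))).comp hcard

lemma norm_pattern (n : ℕ) (z : ℕ → ℝ) (t : ℝ) : ‖pattern n z t‖ = 1 := by
  simp [pattern]

lemma intervalIntegrable_pattern (n : ℕ) (z : ℕ → ℝ) (a b : ℝ) :
    IntervalIntegrable (pattern n z) volume a b :=
  (intervalIntegrable_const (c := (1 : ℝ))).mono_fun
    (measurable_pattern n z).aestronglyMeasurable
    (ae_of_all _ fun t => by simp only [norm_pattern, norm_one, le_refl])

lemma continuous_xi (n : ℕ) (z : ℕ → ℝ) : Continuous (xi n z) :=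
  intervalIntegral.continuous_primitive
    (fun a b => (intervalIntegrable_pattern n z a b).sub intervalIntegrable_const) _

lemma xi_eq (n : ℕ) (z : ℕ → ℝ) (s : ℝ) :
    xi n z s = (∫ t in (-1 : ℝ)..s, pattern n z t) - mass n z * (s + 1) := by
  rw [xi, intervalIntegral.integral_sub (intervalIntegrable_pattern n z _ _)
    intervalIntegrable_const, intervalIntegral.integral_const, smul_eq_mul]
  ring

lemma intervalIntegrable_xi_div (n : ℕ) (z : ℕ → ℝ) {a b : ℝ} (ha : a ∈ Ioo (-1 : ℝ) 1)
    (hb : b ∈ Ioo (-1 : ℝ) 1) :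
    IntervalIntegrable (fun s => xi n z s / (1 - s ^ 2)) volume a b := by
  refine ((continuous_xi n z).continuousOn.div (by fun_prop) fun s hs => ?_).intervalIntegrable
  have hs' : s ∈ Ioo (-1 : ℝ) 1 := OrdConnected.uIcc_subset inferInstance ha hb hs
  nlinarith [hs'.1, hs'.2]

lemma pot_sub_pot (n : ℕ) (z : ℕ → ℝ) {a b : ℝ} (ha : a ∈ Ioo (-1 : ℝ) 1)
    (hb : b ∈ Ioo (-1 : ℝ) 1) :
    pot n z b - pot n z a = ∫ s in a..b, xi n z s / (1 - s ^ 2) :=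
  intervalIntegral.integral_interval_sub_left
    (intervalIntegrable_xi_div n z (by norm_num) hb)
    (intervalIntegrable_xi_div n z (by norm_num) ha)

namespace IsConfig

variable {n k : ℕ} {z : ℕ → ℝ}

lemma interface_le {i j : ℕ} (hz : IsConfig n z) (hij : i ≤ j) (hj : j ≤ n + 1) : z i ≤ z j := by
  rcases hij.eq_or_lt with rfl | hlt
  · exact le_rfl
  · exact (hz.2.2 i j hlt hj).le

lemma interface_mem_Ioo (hz : IsConfig n z) (hk : 1 ≤ k) (hkn : k ≤ n) : z k ∈ Ioo (-1 : ℝ) 1 := by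
  rw [← hz.1, ← hz.2.1]
  exact ⟨hz.2.2 0 k hk (by omega), hz.2.2 k (n + 1) (by omega) le_rfl⟩

lemma pattern_eq (hz : IsConfig n z) (hkn : k ≤ n) {t : ℝ} (ht : t ∈ Ico (z k) (z (k + 1))) :
    pattern n z t = (-1) ^ (k + 1) := by
  have hfilter : (Finset.Icc 1 n).filter (fun i => z i ≤ t) = Finset.Icc 1 k := by
    ext i
    simp only [Finset.mem_filter, Finset.mem_Icc]
    constructor
    · rintro ⟨⟨hi, hin⟩, hit⟩
      refine ⟨hi, ?_⟩
      by_contra! hki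
      exact (ht.2.trans_le (hz.interface_le hki (by omega))).not_ge hit
    · rintro ⟨hi, hik⟩
      exact ⟨⟨hi, hik.trans hkn⟩, (hz.interface_le hik (by omega)).trans ht.1⟩
  rw [pattern, hfilter, Nat.card_Icc, Nat.add_sub_cancel]

lemma integral_pattern (hz : IsConfig n z) (hkn : k ≤ n) {s : ℝ}
    (hs : s ∈ Icc (z k) (z (k + 1))) :
    ∫ t in z k..s, pattern n z t = (-1) ^ (k + 1) * (s - z k) := by
  rw [intervalIntegral.integral_congr_Ioo_of_le (g := fun _ => (-1 : ℝ) ^ (k + 1)) hs.1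
    fun t ht => hz.pattern_eq hkn ⟨ht.1.le, ht.2.trans_le hs.2⟩,
    intervalIntegral.integral_const, smul_eq_mul, mul_comm]

lemma integral_pattern_of_mem_second (hz : IsConfig n z) (hn : 1 ≤ n) {s : ℝ}
    (hs : s ∈ Icc (z 1) (z 2)) :
    ∫ t in (-1 : ℝ)..s, pattern n z t = s - 1 - 2 * z 1 := by
  rw [← hz.1, ← intervalIntegral.integral_add_adjacent_intervals (b := z 1)
      (intervalIntegrable_pattern n z _ _) (intervalIntegrable_pattern n z _ _),
    hz.integral_pattern n.zero_le (right_mem_Icc.2 (hz.interface_le zero_le_one (by omega))),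
    hz.integral_pattern hn hs, hz.1]
  ring

lemma second_le_add_mass (hz : IsConfig n z) (hn : 1 ≤ n) : z 2 ≤ 1 + z 1 + mass n z := by
  have h12 : z 1 ≤ z 2 := hz.interface_le one_le_two (by omega)
  have h2 : z 2 ≤ 1 := hz.2.1 ▸ hz.interface_le (by omega : 2 ≤ n + 1) le_rfl
  have htail : -(1 - z 2) ≤ ∫ t in z 2..1, pattern n z t := by
    have := intervalIntegral.norm_integral_le_of_norm_le_const (a := z 2) (b := 1)
      fun t _ => (norm_pattern n z t).le
    rw [Real.norm_eq_abs, one_mul, abs_of_nonneg (sub_nonneg.2 h2)] at this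
    exact (abs_le.1 this).1
  have hmass : 2 * mass n z = (z 2 - 1 - 2 * z 1) + ∫ t in z 2..1, pattern n z t := by
    rw [← hz.integral_pattern_of_mem_second hn ⟨h12, le_rfl⟩,
      intervalIntegral.integral_add_adjacent_intervals (intervalIntegrable_pattern n z _ _)
        (intervalIntegrable_pattern n z _ _), mass]
    ring
  linarith

lemma two_le_of_first_neg (hz : IsConfig n z) (hm : mass n z ≤ 0) (h1 : z 1 < 0) : 2 ≤ n := by
  have hlast := hz.2.1
  by_contra! hn
  interval_cases n
  · linarith
  · linarith [hz.second_le_add_mass le_rfl]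

lemma sub_le_xi (hz : IsConfig n z) (hn : 1 ≤ n) (hm : mass n z ≤ 0) {s : ℝ}
    (hs : s ∈ Icc (z 1) (z 2)) : s - 1 - 2 * z 1 ≤ xi n z s := by
  have h1 : -1 ≤ z 1 := hz.1 ▸ hz.interface_le zero_le_one (by omega)
  rw [xi_eq, hz.integral_pattern_of_mem_second hn hs]
  nlinarith [hs.1]

lemma neg_half_le_integral_xi_div (hz : IsConfig n z) (hn : 2 ≤ n) (hm : mass n z ≤ 0)
    (h : z 1 ≤ -(1 / 2)) : -(1 / 2) ≤ ∫ s in z 1..z 2, xi n z s / (1 - s ^ 2) := by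
  have h1 := hz.interface_mem_Ioo le_rfl (by omega : 1 ≤ n)
  have h2 := hz.interface_mem_Ioo one_le_two hn
  have hxi {s : ℝ} (hs : s ∈ Icc (z 1) (z 2)) := hz.sub_le_xi (by omega) hm hs
  have hden {s : ℝ} (hs : s ∈ Icc (z 1) (z 2)) : 0 < 1 - s ^ 2 := by
    nlinarith [h1.1, h2.2, hs.1, hs.2]
  calc -(1 / 2) ≤ -1 * (1 + 2 * z 1 - z 1) := by linarith
    _ ≤ ∫ s in z 1..z 2, xi n z s / (1 - s ^ 2) := by
      refine neg_mul_sub_le_integral (hz.interface_le one_le_two (by omega)) (by linarith [h1.1])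
        zero_le_one (intervalIntegrable_xi_div n z h1 h2) (fun s hs hsc => ?_)
        fun s hs hsc => div_nonneg (by linarith [hxi hs]) (hden hs).le
      rw [le_div_iff₀ (hden hs)]
      -- As `s ≤ 0`: `1 - s² = (1 + s)(1 - s) ≥ 1 + s ≥ 1 + z 1 ≥ -ξ(s)`.
      nlinarith [h1.1, hs.1, hxi hs]

end IsConfig

namespace IsCritical

variable {γ : ℝ} {n k : ℕ} {z : ℕ → ℝ}

lemma curvature_add_curvature (hcrit : IsCritical γ n z) (hz : IsConfig n z) (hk : 1 ≤ k)
    (hkn : k + 1 ≤ n) :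
    z k / √(1 - z k ^ 2) + z (k + 1) / √(1 - z (k + 1) ^ 2) =
      (-1) ^ (k + 1) * (4 * γ * ∫ s in z k..z (k + 1), xi n z s / (1 - s ^ 2)) := by
  obtain ⟨lam, hlam⟩ := hcrit
  have hk_eq := hlam k hk (by omega)
  have hk1_eq := hlam (k + 1) (by omega) hkn
  have hsign : ((-1 : ℝ) ^ (k + 1)) * (-1) ^ (k + 1) = 1 := by
    rw [← mul_pow, neg_one_mul, neg_neg, one_pow]
  rw [← pot_sub_pot n z (hz.interface_mem_Ioo hk (by omega)) (hz.interface_mem_Ioo (by omega) hkn)]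
  rw [pow_succ _ (k + 1)] at hk1_eq
  linear_combination (-1) ^ (k + 1) * (hk_eq - hk1_eq) -
    (z k / √(1 - z k ^ 2) + z (k + 1) / √(1 - z (k + 1) ^ 2)) * hsign

lemma neg_le_first_curvature (hcrit : IsCritical γ n z) (hγ : 0 ≤ γ) (hz : IsConfig n z)
    (hm : mass n z ≤ 0) (h : z 1 < -(1 / 2)) :
    -(2 * γ + 1 / √3) ≤ z 1 / √(1 - z 1 ^ 2) := by
  have hn : 2 ≤ n := hz.two_le_of_first_neg hm (by linarith)
  have hsecond : z 2 / √(1 - z 2 ^ 2) ≤ 1 / √3 := by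
    rw [← half_div_sqrt_one_sub_half_sq]
    exact monotoneOn_div_sqrt_one_sub_sq (hz.interface_mem_Ioo one_le_two hn) (by norm_num)
      (by linarith [hz.second_le_add_mass (by omega)])
  have hsum := hcrit.curvature_add_curvature hz le_rfl hn
  norm_num only [one_add_one_eq_two, one_mul] at hsum
  linarith [mul_le_mul_of_nonneg_left (hz.neg_half_le_integral_xi_div hn hm h.le) hγ]

end IsCritical

lemma two_mul_le_six_mul_div_exp_one {γ : ℝ} (hγ : 0 ≤ γ) : 2 * γ ≤ 6 * γ / Real.exp 1 := by
  rw [le_div_iff₀ (Real.exp_pos 1)]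
  nlinarith [Real.exp_one_lt_three]

theorem first_interface_lower_bound_general {γ : ℝ} (hγ : 0 ≤ γ) {n : ℕ} {z : ℕ → ℝ}
    (hz : IsConfig n z) (hm : mass n z ≤ 0) (hcrit : IsCritical γ n z) :
    -(2 * γ + 1 / √3) / √(1 + (-(2 * γ + 1 / √3)) ^ 2) ≤ z 1 := by
  rcases lt_or_ge (z 1) (-(1 / 2)) with h | h
  · have hn : 2 ≤ n := hz.two_le_of_first_neg hm (by linarith)
    exact (div_sqrt_one_add_sq_le_iff (hz.interface_mem_Ioo le_rfl (by omega))).2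
      (hcrit.neg_le_first_curvature hγ hz hm h)
  · refine ((div_sqrt_one_add_sq_le_iff (by norm_num)).2 ?_).trans h
    rw [neg_sq, neg_div, half_div_sqrt_one_sub_half_sq]
    linarith

/-- Proposition: lower bound on the polar cap.  Let `γ > 0` and let an
axisymmetric configuration with `n ≥ 2` interfaces and mass `m = 0` be a critical point
of `E_γ`.  Then `z 1 ≥ a/√(1+a²)` where `a = −(6γ/e + 1/√3)`. -/
theorem first_interface_lower_bound (γ : ℝ) (hγ : 0 < γ)
    (n : ℕ) (hn : 2 ≤ n) (z : ℕ → ℝ) (hz : IsConfig n z)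
    (hm : mass n z = 0) (hcrit : IsCritical γ n z) :
    (-(6 * γ / Real.exp 1 + 1 / Real.sqrt 3))
        / Real.sqrt (1 + (-(6 * γ / Real.exp 1 + 1 / Real.sqrt 3)) ^ 2)
      ≤ z 1 :=
  (div_sqrt_one_add_sq_strictMono.monotone
    (by linarith [two_mul_le_six_mul_div_exp_one hγ.le])).trans
    (first_interface_lower_bound_general hγ.le hz hm.le hcrit)
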